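/- arXiv:2006.05601 — 7 statements merged into one kernel-verified Lean document; each statement's English description precedes it below -/
import Mathlib

section
/- Let X_1, X_2, X_3 be ±1-valued random variables on a standard Borel probability space such that X_1 and X_3 are conditionally independent given the σ-algebra generated by X_2. Then Cov(X_1, X_3)·Var(X_2) = Cov(X_1, X_2)·Cov(X_2, X_3). -/
open MeasureTheory ProbabilityTheory

/-- Covariance `Cov(X,Y) = E[XY] - E[X]E[Y]`. -/
noncomputable def cov {Ω : Type*} [MeasurableSpace Ω] (μ : Measure Ω) (X Y : Ω → ℝ) : ℝ :=
  (∫ ω, X ω * Y ω ∂μ) - (∫ ω, X ω ∂μ) * (∫ ω, Y ω ∂μ)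

/-- Variance `Var(X) = Cov(X,X)`. -/
noncomputable def var {Ω : Type*} [MeasurableSpace Ω] (μ : Measure Ω) (X : Ω → ℝ) : ℝ :=
  cov μ X X

theorem aux_lin {Ω : Type*} [mΩ : MeasurableSpace Ω]
    (μ : Measure Ω) [IsProbabilityMeasure μ] (X Y : Ω → ℝ)
    (hX : Measurable X) (hXpm : ∀ᵐ ω ∂μ, X ω = 1 ∨ X ω = -1)
    (hXi : Integrable X μ)
    (hY : Integrable Y μ) (hYX : Integrable (fun ω => Y ω * X ω) μ) :
    ∃ a b : ℝ, (μ[Y | MeasurableSpace.comap X inferInstance] =ᵐ[μ] fun ω => a + b * X ω) ∧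
      ∫ ω, Y ω ∂μ = a + b * ∫ ω, X ω ∂μ ∧
      ∫ ω, Y ω * X ω ∂μ = a * (∫ ω, X ω ∂μ) + b := by
  have hm := hX.comap_le
  obtain ⟨g, hg, hgX⟩ := (stronglyMeasurable_condExp
    (m := MeasurableSpace.comap X inferInstance) (μ := μ) (f := Y)).measurable.exists_eq_measurable_comp
  have hE : μ[Y | MeasurableSpace.comap X inferInstance] =ᵐ[μ]
      fun ω => (g 1 + g (-1)) / 2 + (g 1 - g (-1)) / 2 * X ω := by
    filter_upwards [hXpm] with ω h
    rw [hgX]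
    rcases h with h | h <;> simp only [Function.comp, h] <;> ring
  refine ⟨_, _, hE, ?_, ?_⟩
  · rw [← integral_condExp hm, integral_congr_ae hE, integral_add (integrable_const _)
      (hXi.const_mul _), integral_const_mul]
    simp
  · have h2 := condExp_mul_of_stronglyMeasurable_right (μ := μ) (f := Y) (g := X)
      (comap_measurable X).stronglyMeasurable hYX hY
    have h3 : μ[Y * X | MeasurableSpace.comap X inferInstance] =ᵐ[μ]
        fun ω => (g 1 + g (-1)) / 2 * X ω + (g 1 - g (-1)) / 2 := by
      filter_upwards [h2, hE, hXpm] with ω h2 hE h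
      rw [h2, Pi.mul_apply, hE]
      rcases h with h | h <;> rw [h] <;> ring
    have : ∫ ω, Y ω * X ω ∂μ = ∫ ω, (Y * X) ω ∂μ := rfl
    rw [this, ← integral_condExp hm, integral_congr_ae h3, integral_add
      (hXi.const_mul _) (integrable_const _), integral_const_mul]
    simp

theorem aux_int {Ω : Type*} [MeasurableSpace Ω]
    (μ : Measure Ω) [IsProbabilityMeasure μ] (X : Ω → ℝ)
    (hX : Measurable X) (hXpm : ∀ᵐ ω ∂μ, X ω = 1 ∨ X ω = -1) : Integrable X μ := by
  refine Integrable.of_bound hX.aestronglyMeasurable 1 ?_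
  filter_upwards [hXpm] with ω h
  rcases h with h | h <;> simp [h]

/-- If ±1-valued `X_1, X_2, X_3` on a standard Borel probability space are such that
`X_1 ⊥ X_3 | σ(X_2)`, then `Cov(X_1,X_3) ⬝ Var(X_2) = Cov(X_1,X_2) ⬝ Cov(X_2,X_3)`. -/
theorem corr_decay_base {Ω : Type*} [MeasurableSpace Ω] [StandardBorelSpace Ω]
    (μ : Measure Ω) [IsProbabilityMeasure μ]
    (X1 X2 X3 : Ω → ℝ)
    (hX1 : Measurable X1) (hX2 : Measurable X2) (hX3 : Measurable X3)
    (hX1pm : ∀ᵐ ω ∂μ, X1 ω = 1 ∨ X1 ω = -1)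
    (hX2pm : ∀ᵐ ω ∂μ, X2 ω = 1 ∨ X2 ω = -1)
    (hX3pm : ∀ᵐ ω ∂μ, X3 ω = 1 ∨ X3 ω = -1)
    (hci : CondIndepFun (MeasurableSpace.comap X2 inferInstance) hX2.comap_le X1 X3 μ) :
    cov μ X1 X3 * var μ X2 = cov μ X1 X2 * cov μ X2 X3 := by
  have i2 := aux_int μ X2 hX2 hX2pm
  have p1 : MeasurableSet (X1 ⁻¹' {1}) := hX1 (measurableSet_singleton _)
  have p3 : MeasurableSet (X3 ⁻¹' {1}) := hX3 (measurableSet_singleton _)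
  have hI : ∀ S : Set Ω, MeasurableSet S → Integrable (S.indicator fun _ => (1 : ℝ)) μ :=
    fun S hS => (integrable_const _).indicator hS
  have hIX : ∀ S : Set Ω, MeasurableSet S →
      Integrable (fun ω => S.indicator (fun _ => (1 : ℝ)) ω * X2 ω) μ := by
    intro S hS
    refine (i2.indicator hS).congr (Filter.Eventually.of_forall fun ω => ?_)
    by_cases h : ω ∈ S <;> simp [h]
  obtain ⟨a, b, hA, hA1, hA2⟩ := aux_lin μ X2 _ hX2 hX2pm i2 (hI _ p1) (hIX _ p1)
  obtain ⟨c, d, hC, hC1, hC2⟩ := aux_lin μ X2 _ hX2 hX2pm i2 (hI _ p3) (hIX _ p3)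
  have hAC := (condIndepFun_iff_condExp_inter_preimage_eq_mul hX1 hX3).1 hci {1} {1}
    (measurableSet_singleton _) (measurableSet_singleton _)
  have hAC1 : ∫ ω, (X1 ⁻¹' {1} ∩ X3 ⁻¹' {1}).indicator (fun _ => (1 : ℝ)) ω ∂μ
      = (a * c + b * d) + (a * d + b * c) * ∫ ω, X2 ω ∂μ := by
    have h3 : μ[(X1 ⁻¹' {1} ∩ X3 ⁻¹' {1}).indicator (fun _ => (1 : ℝ)) |
        MeasurableSpace.comap X2 inferInstance] =ᵐ[μ]
        fun ω => (a * c + b * d) + (a * d + b * c) * X2 ω := by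
      filter_upwards [hAC, hA, hC, hX2pm] with ω h hA hC h2
      refine h.trans ?_
      rw [hA, hC]
      rcases h2 with h | h <;> rw [h] <;> ring
    rw [← integral_condExp hX2.comap_le, integral_congr_ae h3, integral_add (integrable_const _)
      (i2.const_mul _), integral_const_mul]
    simp
  have e1 : ∀ᵐ ω ∂μ, X1 ω = 2 * (X1 ⁻¹' {1}).indicator (fun _ => (1 : ℝ)) ω - 1 := by
    filter_upwards [hX1pm] with ω h
    rcases h with h | h <;> simp [Set.indicator, h] <;> norm_num
  have e3 : ∀ᵐ ω ∂μ, X3 ω = 2 * (X3 ⁻¹' {1}).indicator (fun _ => (1 : ℝ)) ω - 1 := by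
    filter_upwards [hX3pm] with ω h
    rcases h with h | h <;> simp [Set.indicator, h] <;> norm_num
  have E1 : ∫ ω, X1 ω ∂μ = 2 * (a + b * ∫ ω, X2 ω ∂μ) - 1 := by
    rw [integral_congr_ae e1, integral_sub ((hI _ p1).const_mul _) (integrable_const _),
      integral_const_mul, hA1]
    simp
  have E3 : ∫ ω, X3 ω ∂μ = 2 * (c + d * ∫ ω, X2 ω ∂μ) - 1 := by
    rw [integral_congr_ae e3, integral_sub ((hI _ p3).const_mul _) (integrable_const _),
      integral_const_mul, hC1]
    simp
  have E12 : ∫ ω, X1 ω * X2 ω ∂μ = 2 * (a * (∫ ω, X2 ω ∂μ) + b) - ∫ ω, X2 ω ∂μ := by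
    rw [← hA2, ← integral_const_mul, ← integral_sub ((hIX _ p1).const_mul _) i2]
    refine integral_congr_ae ?_
    filter_upwards [e1] with ω h
    rw [h]; ring
  have E23 : ∫ ω, X2 ω * X3 ω ∂μ = 2 * (c * (∫ ω, X2 ω ∂μ) + d) - ∫ ω, X2 ω ∂μ := by
    rw [← hC2, ← integral_const_mul, ← integral_sub ((hIX _ p3).const_mul _) i2]
    refine integral_congr_ae ?_
    filter_upwards [e3] with ω h
    rw [h]; ring
  have E22 : ∫ ω, X2 ω * X2 ω ∂μ = 1 := by
    have : ∀ᵐ ω ∂μ, X2 ω * X2 ω = 1 := by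
      filter_upwards [hX2pm] with ω h
      rcases h with h | h <;> rw [h] <;> norm_num
    rw [integral_congr_ae this]; simp
  have E13 : ∫ ω, X1 ω * X3 ω ∂μ =
      4 * ((a * c + b * d) + (a * d + b * c) * ∫ ω, X2 ω ∂μ) - (∫ ω, X1 ω ∂μ)
        - (∫ ω, X3 ω ∂μ) - 1 := by
    have i1 := aux_int μ X1 hX1 hX1pm
    have i3 := aux_int μ X3 hX3 hX3pm
    have iac := (hI _ (p1.inter p3)).const_mul 4
    have j1 : Integrable (fun ω =>
        4 * (X1 ⁻¹' {1} ∩ X3 ⁻¹' {1}).indicator (fun _ => (1 : ℝ)) ω - X1 ω) μ := iac.sub i1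
    have j2 : Integrable (fun ω =>
        4 * (X1 ⁻¹' {1} ∩ X3 ⁻¹' {1}).indicator (fun _ => (1 : ℝ)) ω - X1 ω - X3 ω) μ := j1.sub i3
    have e : ∀ᵐ ω ∂μ, X1 ω * X3 ω =
        4 * (X1 ⁻¹' {1} ∩ X3 ⁻¹' {1}).indicator (fun _ => (1 : ℝ)) ω - X1 ω - X3 ω - 1 := by
      filter_upwards [hX1pm, hX3pm] with ω h h'
      rcases h with h | h <;> rcases h' with h' | h' <;> simp [Set.indicator, h, h'] <;> norm_num
    rw [integral_congr_ae e, integral_sub j2 (integrable_const _), integral_sub j1 i3,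
      integral_sub iac i1, integral_const_mul, hAC1]
    simp
  unfold var cov
  rw [E13, E12, E23, E22, E1, E3]
  ring
end

section
/- Let X_1, X_2, X_3 be ±1-valued random variables on a standard Borel probability space such that X_2 and X_3 are conditionally independent given the σ-algebra generated by X_1, and let X_i^e = ε_i X_i be noisy versions where ε_1, ε_2, ε_3 are ±1-valued with P(ε_i = −1) = q_i ∈ [0, 1/2), and ε_1, ε_2, ε_3, (X_1, X_2, X_3) are mutually independent. Write Σ'_{i,j} = Cov(X_i^e, X_j^e) and Σ'_{1,1} = Var(X_1^e). If Σ'_{2,3} ≠ 0, then (1 − 2q_1)² = 1 − Σ'_{1,1} + Σ'_{1,2}Σ'_{1,3}/Σ'_{2,3}. -/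
open MeasureTheory ProbabilityTheory

lemma nq_int {Ω : Type*} [MeasurableSpace Ω] {μ : Measure Ω} [IsProbabilityMeasure μ]
    {f : Ω → ℝ} (hf : Measurable f) (h : ∀ᵐ ω ∂μ, f ω = 1 ∨ f ω = -1) : Integrable f μ := by
  refine Integrable.of_bound hf.aestronglyMeasurable 1 ?_
  filter_upwards [h] with ω hω
  rcases hω with h | h <;> simp [h]

lemma nq_mul {Ω : Type*} [MeasurableSpace Ω] {μ : Measure Ω}
    {f g : Ω → ℝ} (h : ∀ᵐ ω ∂μ, f ω = 1 ∨ f ω = -1) (h' : ∀ᵐ ω ∂μ, g ω = 1 ∨ g ω = -1) :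
    ∀ᵐ ω ∂μ, f ω * g ω = 1 ∨ f ω * g ω = -1 := by
  filter_upwards [h, h'] with ω h1 h2
  rcases h1 with h | h <;> rcases h2 with h' | h' <;> simp [h, h']

lemma nq_mean {Ω : Type*} [MeasurableSpace Ω] {μ : Measure Ω} [IsProbabilityMeasure μ]
    {e : Ω → ℝ} {q : ℝ} (he : Measurable e) (h : ∀ᵐ ω ∂μ, e ω = 1 ∨ e ω = -1)
    (hq : (μ {ω | e ω = -1}).toReal = q) : ∫ ω, e ω ∂μ = 1 - 2 * q := by
  have hm : MeasurableSet {ω | e ω = -1} := he (measurableSet_singleton (-1))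
  have h1 : ∫ ω, e ω ∂μ = ∫ ω, (1 - 2 * ({ω | e ω = -1}.indicator (fun _ => (1:ℝ)) ω)) ∂μ := by
    apply integral_congr_ae
    filter_upwards [h] with ω hω
    rcases hω with h | h
    · have : ω ∉ {ω | e ω = -1} := by simp [h]; norm_num
      simp [Set.indicator_of_notMem this, h]
    · have : ω ∈ {ω | e ω = -1} := h
      simp only [Set.indicator_of_mem this, h]; norm_num
  have hi : Integrable ({ω | e ω = -1}.indicator (fun _ => (1:ℝ))) μ :=
    (integrable_const 1).indicator hm
  rw [h1, integral_sub (integrable_const _) (hi.const_mul 2), integral_const_mul,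
    integral_indicator hm]
  simp [← hq, Measure.real]

lemma nq_aff {Ω : Type*} [mΩ : MeasurableSpace Ω] {μ : Measure Ω} [IsProbabilityMeasure μ]
    {X f : Ω → ℝ} (hf : StronglyMeasurable[MeasurableSpace.comap X inferInstance] f)
    (h : ∀ᵐ ω ∂μ, X ω = 1 ∨ X ω = -1) : ∃ a b : ℝ, ∀ᵐ ω ∂μ, f ω = a + b * X ω := by
  obtain ⟨g, -, rfl⟩ := hf.exists_eq_measurable_comp
  refine ⟨(g 1 + g (-1)) / 2, (g 1 - g (-1)) / 2, ?_⟩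
  filter_upwards [h] with ω hω
  rcases hω with h | h <;> simp [h] <;> ring

/-- moments against an affine function of `X` -/
lemma nq_affint {Ω : Type*} [mΩ : MeasurableSpace Ω] {μ : Measure Ω} [IsProbabilityMeasure μ]
    {X f : Ω → ℝ} {a b : ℝ} (hX : Measurable X) (h : ∀ᵐ ω ∂μ, X ω = 1 ∨ X ω = -1)
    (hf : ∀ᵐ ω ∂μ, f ω = a + b * X ω) : ∫ ω, f ω ∂μ = a + b * ∫ ω, X ω ∂μ := by
  rw [integral_congr_ae hf, integral_add (integrable_const _) ((nq_int hX h).const_mul b),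
    integral_const_mul]
  simp

lemma nq_set {Ω : Type*} [mΩ : MeasurableSpace Ω] {μ : Measure Ω} [IsProbabilityMeasure μ]
    {X : Ω → ℝ} {A : Set Ω} (hX : Measurable X) (h : ∀ᵐ ω ∂μ, X ω = 1 ∨ X ω = -1)
    (hA : MeasurableSet A) : ∃ a b : ℝ,
      (∀ᵐ ω ∂μ, (μ[A.indicator (fun _ => (1:ℝ)) | MeasurableSpace.comap X inferInstance]) ω
        = a + b * X ω) ∧
      ∫ ω, A.indicator (fun _ => (1:ℝ)) ω ∂μ = a + b * ∫ ω, X ω ∂μ ∧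
      ∫ ω, X ω * A.indicator (fun _ => (1:ℝ)) ω ∂μ = b + a * ∫ ω, X ω ∂μ := by
  obtain ⟨a, b, hab⟩ := nq_aff (μ := μ) (stronglyMeasurable_condExp
    (μ := μ) (f := A.indicator (fun _ => (1:ℝ)))) h
  refine ⟨a, b, hab, ?_, ?_⟩
  · rw [← integral_condExp hX.comap_le, nq_affint hX h hab]
  · have hXm : StronglyMeasurable[MeasurableSpace.comap X inferInstance] X :=
      (comap_measurable X).stronglyMeasurable
    have hb := condExp_stronglyMeasurable_mul_of_bound (μ := μ) hX.comap_le hXm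
      ((integrable_const (1:ℝ)).indicator hA) 1 (by
        filter_upwards [h] with ω hω
        rcases hω with h | h <;> simp [h])
    have := integral_condExp (μ := μ) (f := X * A.indicator (fun _ => (1:ℝ))) hX.comap_le
    simp only [Pi.mul_apply] at this
    rw [← this]
    apply nq_affint hX h
    filter_upwards [hb, hab, h] with ω h1 h2 h3
    rw [h1, Pi.mul_apply, h2]
    rcases h3 with h | h <;> rw [h] <;> ring

lemma nq_key {Ω : Type*} [MeasurableSpace Ω] [StandardBorelSpace Ω]
    (μ : Measure Ω) [IsProbabilityMeasure μ] (X1 X2 X3 : Ω → ℝ)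
    (hX1 : Measurable X1) (hX2 : Measurable X2) (hX3 : Measurable X3)
    (h1 : ∀ᵐ ω ∂μ, X1 ω = 1 ∨ X1 ω = -1)
    (h2 : ∀ᵐ ω ∂μ, X2 ω = 1 ∨ X2 ω = -1)
    (h3 : ∀ᵐ ω ∂μ, X3 ω = 1 ∨ X3 ω = -1)
    (hci : CondIndepFun (MeasurableSpace.comap X1 inferInstance) hX1.comap_le X2 X3 μ) :
    (1 - (∫ ω, X1 ω ∂μ) ^ 2) * cov μ X2 X3 = cov μ X1 X2 * cov μ X1 X3 := by
  have hA : MeasurableSet (X2 ⁻¹' {1}) := hX2 (measurableSet_singleton 1)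
  have hB : MeasurableSet (X3 ⁻¹' {1}) := hX3 (measurableSet_singleton 1)
  have hc := (condIndepFun_iff_condExp_inter_preimage_eq_mul hX2 hX3).1 hci {1} {1}
    (measurableSet_singleton 1) (measurableSet_singleton 1)
  obtain ⟨a, b, hab, u1, u2⟩ := nq_set (μ := μ) hX1 h1 hA
  obtain ⟨c, d, hcd, v1, v2⟩ := nq_set (μ := μ) hX1 h1 hB
  have w : ∫ ω, (X2 ⁻¹' {1} ∩ X3 ⁻¹' {1}).indicator (fun _ => (1:ℝ)) ω ∂μ
      = (a * c + b * d) + (a * d + b * c) * ∫ ω, X1 ω ∂μ := by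
    rw [← integral_condExp hX1.comap_le]
    apply nq_affint hX1 h1
    filter_upwards [hc, hab, hcd, h1] with ω k1 k2 k3 k4
    rw [k1, k2, k3]
    rcases k4 with h | h <;> rw [h] <;> ring
  have iA : Integrable ((X2 ⁻¹' {1}).indicator (fun _ => (1:ℝ))) μ :=
    (integrable_const (1:ℝ)).indicator hA
  have iB : Integrable ((X3 ⁻¹' {1}).indicator (fun _ => (1:ℝ))) μ :=
    (integrable_const (1:ℝ)).indicator hB
  have iAB : Integrable ((X2 ⁻¹' {1} ∩ X3 ⁻¹' {1}).indicator (fun _ => (1:ℝ))) μ :=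
    (integrable_const (1:ℝ)).indicator (hA.inter hB)
  have ind : ∀ Y : Ω → ℝ, ∀ ω, (Y ω = 1 ∨ Y ω = -1) →
      Y ω = 2 * (Y ⁻¹' {1}).indicator (fun _ => (1:ℝ)) ω - 1 := by
    intro Y ω h
    rcases h with h | h
    · have : ω ∈ Y ⁻¹' {1} := h
      rw [Set.indicator_of_mem this, h]; norm_num
    · have : ω ∉ Y ⁻¹' {1} := by simp [h]; norm_num
      rw [Set.indicator_of_notMem this, h]; norm_num
  have mean : ∀ Y : Ω → ℝ, Measurable Y → (∀ᵐ ω ∂μ, Y ω = 1 ∨ Y ω = -1) →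
      ∫ ω, Y ω ∂μ = 2 * ∫ ω, (Y ⁻¹' {1}).indicator (fun _ => (1:ℝ)) ω ∂μ - 1 := by
    intro Y hY h
    have hA : MeasurableSet (Y ⁻¹' {1}) := hY (measurableSet_singleton 1)
    have iA : Integrable ((Y ⁻¹' {1}).indicator (fun _ => (1:ℝ))) μ :=
      (integrable_const (1:ℝ)).indicator hA
    rw [integral_congr_ae (h.mono (ind Y)), integral_sub (iA.const_mul 2) (integrable_const _),
      integral_const_mul]
    simp
  have cross : ∀ Y : Ω → ℝ, Measurable Y → (∀ᵐ ω ∂μ, Y ω = 1 ∨ Y ω = -1) →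
      ∫ ω, X1 ω * Y ω ∂μ =
        2 * ∫ ω, X1 ω * (Y ⁻¹' {1}).indicator (fun _ => (1:ℝ)) ω ∂μ - ∫ ω, X1 ω ∂μ := by
    intro Y hY h
    have hA : MeasurableSet (Y ⁻¹' {1}) := hY (measurableSet_singleton 1)
    have iA : Integrable (fun ω => X1 ω * (Y ⁻¹' {1}).indicator (fun _ => (1:ℝ)) ω) μ := by
      refine (((nq_int hX1 h1)).indicator hA).congr (.of_forall fun ω => ?_)
      by_cases hω : ω ∈ Y ⁻¹' {1}
      · simp only [Set.indicator_of_mem hω, mul_one]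
      · simp only [Set.indicator_of_notMem hω, mul_zero]
    rw [← integral_const_mul, ← integral_sub (iA.const_mul 2) (nq_int hX1 h1)]
    apply integral_congr_ae
    filter_upwards [h] with ω hω
    rw [ind Y ω hω]
    simp only [← ind Y ω hω]
    linear_combination X1 ω * ind Y ω hω
  have x23 : ∫ ω, X2 ω * X3 ω ∂μ =
      4 * ∫ ω, (X2 ⁻¹' {1} ∩ X3 ⁻¹' {1}).indicator (fun _ => (1:ℝ)) ω ∂μ
      - 2 * ∫ ω, (X2 ⁻¹' {1}).indicator (fun _ => (1:ℝ)) ω ∂μ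
      - 2 * ∫ ω, (X3 ⁻¹' {1}).indicator (fun _ => (1:ℝ)) ω ∂μ + 1 := by
    have e : ∀ᵐ ω ∂μ, X2 ω * X3 ω =
      4 * (X2 ⁻¹' {1} ∩ X3 ⁻¹' {1}).indicator (fun _ => (1:ℝ)) ω
      - 2 * (X2 ⁻¹' {1}).indicator (fun _ => (1:ℝ)) ω
      - 2 * (X3 ⁻¹' {1}).indicator (fun _ => (1:ℝ)) ω + 1 := by
      filter_upwards [h2, h3] with ω k2 k3
      have : (X2 ⁻¹' {1} ∩ X3 ⁻¹' {1}).indicator (fun _ => (1:ℝ)) ω =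
        (X2 ⁻¹' {1}).indicator (fun _ => (1:ℝ)) ω * (X3 ⁻¹' {1}).indicator (fun _ => (1:ℝ)) ω := by
        have := congrFun (Set.inter_indicator_one (M₀ := ℝ) (s := X2 ⁻¹' {1}) (t := X3 ⁻¹' {1})) ω
        exact this
      rw [this]
      have e2 := ind X2 ω k2
      have e3 := ind X3 ω k3
      generalize (X2 ⁻¹' {1}).indicator (fun _ => (1:ℝ)) ω = p at *
      generalize (X3 ⁻¹' {1}).indicator (fun _ => (1:ℝ)) ω = r at *
      rw [e2, e3]; ring
    have t1 : Integrable (fun ω => 4 * (X2 ⁻¹' {1} ∩ X3 ⁻¹' {1}).indicator (fun _ => (1:ℝ)) ω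
      - 2 * (X2 ⁻¹' {1}).indicator (fun _ => (1:ℝ)) ω) μ := (iAB.const_mul 4).sub (iA.const_mul 2)
    have t2 : Integrable (fun ω => 4 * (X2 ⁻¹' {1} ∩ X3 ⁻¹' {1}).indicator (fun _ => (1:ℝ)) ω
      - 2 * (X2 ⁻¹' {1}).indicator (fun _ => (1:ℝ)) ω
      - 2 * (X3 ⁻¹' {1}).indicator (fun _ => (1:ℝ)) ω) μ := t1.sub (iB.const_mul 2)
    rw [integral_congr_ae e, integral_add t2 (integrable_const _), integral_sub t1
      (iB.const_mul 2), integral_sub (iAB.const_mul 4) (iA.const_mul 2), integral_const_mul,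
      integral_const_mul, integral_const_mul]
    simp
  unfold cov
  rw [x23, cross X2 hX2 h2, cross X3 hX3 h3, mean X2 hX2 h2, mean X3 hX3 h3, u1, u2, v1, v2, w]
  ring

/-- Let `X_2 ⊥ X_3 | σ(X_1)` for ±1-valued `X_1, X_2, X_3`, and let
`X_i^e = ε_i X_i` be noisy versions with flip probabilities `q_i ∈ [0, 1/2)`, where
`ε_1, ε_2, ε_3, (X_1,X_2,X_3)` are mutually independent. Writing `Σ'_{i,j}` for the noisy
covariances and `Σ'_{1,1}` for the noisy variance, if `Σ'_{2,3} ≠ 0` then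
`(1 - 2q_1)² = 1 - Σ'_{1,1} + Σ'_{1,2}Σ'_{1,3}/Σ'_{2,3}`. -/
theorem noisy_quadratic {Ω : Type*} [MeasurableSpace Ω] [StandardBorelSpace Ω]
    (μ : Measure Ω) [IsProbabilityMeasure μ]
    (X1 X2 X3 ε1 ε2 ε3 : Ω → ℝ) (q1 q2 q3 : ℝ)
    (hX1 : Measurable X1) (hX2 : Measurable X2) (hX3 : Measurable X3)
    (hε1 : Measurable ε1) (hε2 : Measurable ε2) (hε3 : Measurable ε3)
    (hX1pm : ∀ᵐ ω ∂μ, X1 ω = 1 ∨ X1 ω = -1)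
    (hX2pm : ∀ᵐ ω ∂μ, X2 ω = 1 ∨ X2 ω = -1)
    (hX3pm : ∀ᵐ ω ∂μ, X3 ω = 1 ∨ X3 ω = -1)
    (hε1pm : ∀ᵐ ω ∂μ, ε1 ω = 1 ∨ ε1 ω = -1)
    (hε2pm : ∀ᵐ ω ∂μ, ε2 ω = 1 ∨ ε2 ω = -1)
    (hε3pm : ∀ᵐ ω ∂μ, ε3 ω = 1 ∨ ε3 ω = -1)
    (hq1 : (μ {ω | ε1 ω = -1}).toReal = q1) (hq1' : 0 ≤ q1) (hq1'' : q1 < 1 / 2)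
    (hq2 : (μ {ω | ε2 ω = -1}).toReal = q2) (hq2' : 0 ≤ q2) (hq2'' : q2 < 1 / 2)
    (hq3 : (μ {ω | ε3 ω = -1}).toReal = q3) (hq3' : 0 ≤ q3) (hq3'' : q3 < 1 / 2)
    -- `X_2 ⊥ X_3 | σ(X_1)`:
    (hci : CondIndepFun (MeasurableSpace.comap X1 inferInstance) hX1.comap_le X2 X3 μ)
    -- mutual independence of `ε_1, ε_2, ε_3, (X_1, X_2, X_3)`:
    (hindep1 : IndepFun ε1 ε2 μ)
    (hindep2 : IndepFun (fun ω => (ε1 ω, ε2 ω)) ε3 μ)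
    (hindep3 : IndepFun (fun ω => (ε1 ω, ε2 ω, ε3 ω)) (fun ω => (X1 ω, X2 ω, X3 ω)) μ)
    (hne : cov μ (fun ω => ε2 ω * X2 ω) (fun ω => ε3 ω * X3 ω) ≠ 0) :
    (1 - 2 * q1) ^ 2 =
      1 - var μ (fun ω => ε1 ω * X1 ω)
        + cov μ (fun ω => ε1 ω * X1 ω) (fun ω => ε2 ω * X2 ω)
          * cov μ (fun ω => ε1 ω * X1 ω) (fun ω => ε3 ω * X3 ω)
          / cov μ (fun ω => ε2 ω * X2 ω) (fun ω => ε3 ω * X3 ω) := by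

  have eX : ∀ {f g : Ω → ℝ}, Measurable f → Measurable g → IndepFun f g μ →
      ∫ ω, f ω * g ω ∂μ = (∫ ω, f ω ∂μ) * ∫ ω, g ω ∂μ := by
    intro f g hf hg h
    exact h.integral_fun_mul_eq_mul_integral hf.aestronglyMeasurable hg.aestronglyMeasurable
  have i12 := hindep1
  have i13 : IndepFun ε1 ε3 μ := hindep2.comp measurable_fst measurable_id
  have i23 : IndepFun ε2 ε3 μ := hindep2.comp measurable_snd measurable_id
  have m1 : ∫ ω, ε1 ω * X1 ω ∂μ = (1 - 2 * q1) * ∫ ω, X1 ω ∂μ := by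
    rw [eX hε1 hX1 (hindep3.comp measurable_fst measurable_fst), nq_mean hε1 hε1pm hq1]
  have m2 : ∫ ω, ε2 ω * X2 ω ∂μ = (1 - 2 * q2) * ∫ ω, X2 ω ∂μ := by
    rw [eX hε2 hX2 (hindep3.comp (measurable_fst.comp measurable_snd)
      (measurable_fst.comp measurable_snd)), nq_mean hε2 hε2pm hq2]
  have m3 : ∫ ω, ε3 ω * X3 ω ∂μ = (1 - 2 * q3) * ∫ ω, X3 ω ∂μ := by
    rw [eX hε3 hX3 (hindep3.comp (measurable_snd.comp measurable_snd)
      (measurable_snd.comp measurable_snd)), nq_mean hε3 hε3pm hq3]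
  have p12 : ∫ ω, (ε1 ω * X1 ω) * (ε2 ω * X2 ω) ∂μ
      = (1 - 2 * q1) * (1 - 2 * q2) * ∫ ω, X1 ω * X2 ω ∂μ := by
    have h : IndepFun (fun ω => ε1 ω * ε2 ω) (fun ω => X1 ω * X2 ω) μ :=
      hindep3.comp (φ := fun p : ℝ × ℝ × ℝ => p.1 * p.2.1) (ψ := fun p : ℝ × ℝ × ℝ => p.1 * p.2.1)
        (by fun_prop) (by fun_prop)
    rw [integral_congr_ae (.of_forall fun ω => mul_mul_mul_comm (ε1 ω) (X1 ω) (ε2 ω) (X2 ω)),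
      eX (f := fun ω => ε1 ω * ε2 ω) (g := fun ω => X1 ω * X2 ω) (hε1.mul hε2) (hX1.mul hX2) h,
      eX hε1 hε2 i12, nq_mean hε1 hε1pm hq1,
      nq_mean hε2 hε2pm hq2]
  have p13 : ∫ ω, (ε1 ω * X1 ω) * (ε3 ω * X3 ω) ∂μ
      = (1 - 2 * q1) * (1 - 2 * q3) * ∫ ω, X1 ω * X3 ω ∂μ := by
    have h : IndepFun (fun ω => ε1 ω * ε3 ω) (fun ω => X1 ω * X3 ω) μ :=
      hindep3.comp (φ := fun p : ℝ × ℝ × ℝ => p.1 * p.2.2) (ψ := fun p : ℝ × ℝ × ℝ => p.1 * p.2.2)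
        (by fun_prop) (by fun_prop)
    rw [integral_congr_ae (.of_forall fun ω => mul_mul_mul_comm (ε1 ω) (X1 ω) (ε3 ω) (X3 ω)),
      eX (f := fun ω => ε1 ω * ε3 ω) (g := fun ω => X1 ω * X3 ω) (hε1.mul hε3) (hX1.mul hX3) h,
      eX hε1 hε3 i13, nq_mean hε1 hε1pm hq1,
      nq_mean hε3 hε3pm hq3]
  have p23 : ∫ ω, (ε2 ω * X2 ω) * (ε3 ω * X3 ω) ∂μ
      = (1 - 2 * q2) * (1 - 2 * q3) * ∫ ω, X2 ω * X3 ω ∂μ := by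
    have h : IndepFun (fun ω => ε2 ω * ε3 ω) (fun ω => X2 ω * X3 ω) μ :=
      hindep3.comp (φ := fun p : ℝ × ℝ × ℝ => p.2.1 * p.2.2)
        (ψ := fun p : ℝ × ℝ × ℝ => p.2.1 * p.2.2) (by fun_prop) (by fun_prop)
    rw [integral_congr_ae (.of_forall fun ω => mul_mul_mul_comm (ε2 ω) (X2 ω) (ε3 ω) (X3 ω)),
      eX (f := fun ω => ε2 ω * ε3 ω) (g := fun ω => X2 ω * X3 ω) (hε2.mul hε3) (hX2.mul hX3) h,
      eX hε2 hε3 i23, nq_mean hε2 hε2pm hq2,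
      nq_mean hε3 hε3pm hq3]
  have p11 : ∫ ω, (ε1 ω * X1 ω) * (ε1 ω * X1 ω) ∂μ = 1 := by
    have : ∀ᵐ ω ∂μ, (ε1 ω * X1 ω) * (ε1 ω * X1 ω) = 1 := by
      filter_upwards [nq_mul hε1pm hX1pm] with ω h
      rcases h with h | h <;> rw [h] <;> norm_num
    rw [integral_congr_ae this]; simp
  have key := nq_key μ X1 X2 X3 hX1 hX2 hX3 hX1pm hX2pm hX3pm hci
  have hd := mul_div_cancel_right₀ ((1 - 2 * q1) ^ 2 * (1 - (∫ ω, X1 ω ∂μ) ^ 2)) hne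
  have hnum : cov μ (fun ω => ε1 ω * X1 ω) (fun ω => ε2 ω * X2 ω)
      * cov μ (fun ω => ε1 ω * X1 ω) (fun ω => ε3 ω * X3 ω) =
      ((1 - 2 * q1) ^ 2 * (1 - (∫ ω, X1 ω ∂μ) ^ 2))
        * cov μ (fun ω => ε2 ω * X2 ω) (fun ω => ε3 ω * X3 ω) := by
    unfold cov at key ⊢
    rw [p12, p13, p23, m1, m2, m3]
    linear_combination (-(1 - 2 * q1) ^ 2 * (1 - 2 * q2) * (1 - 2 * q3)) * key
  rw [hnum, hd]
  unfold var cov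
  rw [p11, m1]
  ring
end

section
/- (Chain yields a non-star pairing equality) Let X_1, X_2, X_3, X_4 be ±1-valued random variables on a standard Borel probability space with Var(X_l) > 0 for all l, forming a Markov chain in this order: for all 1 ≤ i < j < k ≤ 4, X_i and X_k are conditionally independent given the σ-algebra generated by X_j. Let X_l^e = ε_l X_l be noisy versions, where ε_1, …, ε_4 are ±1-valued with P(ε_l = −1) = q_l ∈ [0, 1/2) and ε_1, …, ε_4, (X_1, …, X_4) are mutually independent, and write Σ'_{i,j} = Cov(X_i^e, X_j^e). Then Σ'_{1,3}·Σ'_{2,4} = Σ'_{1,4}·Σ'_{2,3}. -/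
open MeasureTheory ProbabilityTheory

lemma pm_int {Ω : Type*} [MeasurableSpace Ω] {μ : Measure Ω} [IsProbabilityMeasure μ]
    {Z : Ω → ℝ} (hZ : Measurable Z) (h : ∀ᵐ ω ∂μ, Z ω = 1 ∨ Z ω = -1) : Integrable Z μ := by
  refine Integrable.of_bound hZ.aestronglyMeasurable 1 ?_
  filter_upwards [h] with ω h
  rcases h with h | h <;> simp [h]

lemma pm_mul_int {Ω : Type*} [MeasurableSpace Ω] {μ : Measure Ω}
    {f Z : Ω → ℝ} (hf : Integrable f μ) (hZ : Measurable Z)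
    (h : ∀ᵐ ω ∂μ, Z ω = 1 ∨ Z ω = -1) : Integrable (fun ω => f ω * Z ω) μ := by
  refine hf.mul_bdd (c := 1) hZ.aestronglyMeasurable ?_
  filter_upwards [h] with ω h
  rcases h with h | h <;> simp [h]

lemma int_affine {Ω : Type*} [MeasurableSpace Ω] {μ : Measure Ω} [IsProbabilityMeasure μ]
    {Z : Ω → ℝ} (hZ : Integrable Z μ) (a b : ℝ) :
    ∫ ω, (a + b * Z ω) ∂μ = a + b * ∫ ω, Z ω ∂μ := by
  rw [integral_add (by fun_prop) (by fun_prop), integral_const_mul]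
  simp

lemma condlin {Ω : Type*} [MeasurableSpace Ω]
    (μ : Measure Ω) [IsProbabilityMeasure μ] (Z f : Ω → ℝ) (hZ : Measurable Z)
    (hZpm : ∀ᵐ ω ∂μ, Z ω = 1 ∨ Z ω = -1) (hf : Integrable f μ) :
    ∃ a b : ℝ, (μ[f | MeasurableSpace.comap Z inferInstance] =ᵐ[μ] fun ω => a + b * Z ω) ∧
      ∫ ω, f ω ∂μ = a + b * ∫ ω, Z ω ∂μ ∧
      ∫ ω, f ω * Z ω ∂μ = b + a * ∫ ω, Z ω ∂μ := by
  obtain ⟨h, -, hh⟩ := (stronglyMeasurable_condExp (μ := μ) (f := f)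
    (m := MeasurableSpace.comap Z inferInstance)).exists_eq_measurable_comp
  have key : μ[f | MeasurableSpace.comap Z inferInstance] =ᵐ[μ]
      fun ω => (h 1 + h (-1)) / 2 + (h 1 - h (-1)) / 2 * Z ω := by
    rw [hh]
    filter_upwards [hZpm] with ω hω
    rcases hω with hω | hω <;> simp [hω] <;> ring
  have hZi := pm_int hZ hZpm
  refine ⟨_, _, key, ?_, ?_⟩
  · rw [← integral_condExp hZ.comap_le, integral_congr_ae key, int_affine hZi]
  · have h2 : μ[f * Z | MeasurableSpace.comap Z inferInstance] =ᵐ[μ]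
        μ[f | MeasurableSpace.comap Z inferInstance] * Z :=
      condExp_mul_of_stronglyMeasurable_right
        (comap_measurable Z).stronglyMeasurable (pm_mul_int hf hZ hZpm) hf
    have h3 : ∫ ω, f ω * Z ω ∂μ = ∫ ω, (f * Z) ω ∂μ := rfl
    rw [h3, ← integral_condExp hZ.comap_le, integral_congr_ae h2, ← int_affine hZi]
    refine integral_congr_ae ?_
    filter_upwards [key, hZpm] with ω hk hω
    simp only [Pi.mul_apply, hk]
    rcases hω with hω | hω <;> simp [hω] <;> ring

lemma cov_chain {Ω : Type*} [MeasurableSpace Ω] [StandardBorelSpace Ω]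
    (μ : Measure Ω) [IsProbabilityMeasure μ] (X Y Z : Ω → ℝ)
    (hX : Measurable X) (hY : Measurable Y) (hZ : Measurable Z)
    (hXpm : ∀ᵐ ω ∂μ, X ω = 1 ∨ X ω = -1)
    (hYpm : ∀ᵐ ω ∂μ, Y ω = 1 ∨ Y ω = -1)
    (hZpm : ∀ᵐ ω ∂μ, Z ω = 1 ∨ Z ω = -1)
    (hci : CondIndepFun (MeasurableSpace.comap Z inferInstance) hZ.comap_le X Y μ) :
    cov μ X Y * var μ Z = cov μ X Z * cov μ Z Y := by
  rw [condIndepFun_iff_condExp_inter_preimage_eq_mul hX hY] at hci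
  have hc := hci {1} {1} (measurableSet_singleton _) (measurableSet_singleton _)
  have mP : MeasurableSet (X ⁻¹' {1}) := hX (measurableSet_singleton _)
  have mQ : MeasurableSet (Y ⁻¹' {1}) := hY (measurableSet_singleton _)
  set P : Ω → ℝ := (X ⁻¹' {1}).indicator (fun _ => (1:ℝ)) with hP
  set Q : Ω → ℝ := (Y ⁻¹' {1}).indicator (fun _ => (1:ℝ)) with hQ
  set R : Ω → ℝ := (X ⁻¹' {1} ∩ Y ⁻¹' {1}).indicator (fun _ => (1:ℝ)) with hR
  have iP : Integrable P μ := (integrable_const _).indicator mP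
  have iQ : Integrable Q μ := (integrable_const _).indicator mQ
  have iR : Integrable R μ := (integrable_const _).indicator (mP.inter mQ)
  have iZ := pm_int hZ hZpm
  have eX : X =ᵐ[μ] fun ω => 2 * P ω - 1 := by
    filter_upwards [hXpm] with ω h
    rcases h with h | h <;> simp [hP, Set.indicator, h] <;> norm_num
  have eY : Y =ᵐ[μ] fun ω => 2 * Q ω - 1 := by
    filter_upwards [hYpm] with ω h
    rcases h with h | h <;> simp [hQ, Set.indicator, h] <;> norm_num
  have eR : ∀ ω, P ω * Q ω = R ω := by
    intro ω
    by_cases h1 : X ω = 1 <;> by_cases h2 : Y ω = 1 <;> simp [hP, hQ, hR, Set.indicator, h1, h2]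
  obtain ⟨a, b, k1, k2, k3⟩ := condlin μ Z P hZ hZpm iP
  obtain ⟨c, d, l1, l2, l3⟩ := condlin μ Z Q hZ hZpm iQ
  have iPZ := pm_mul_int iP hZ hZpm
  have iQZ := pm_mul_int iQ hZ hZpm
  have r : ∫ ω, R ω ∂μ = (a * c + b * d) + (a * d + b * c) * ∫ ω, Z ω ∂μ := by
    rw [← integral_condExp hZ.comap_le, integral_congr_ae hc, ← int_affine iZ]
    refine integral_congr_ae ?_
    filter_upwards [k1, l1, hZpm] with ω h1 h2 hω
    rw [h1, h2]
    rcases hω with hω | hω <;> simp [hω] <;> ring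
  have x1 : ∫ ω, X ω ∂μ = 2 * ∫ ω, P ω ∂μ - 1 := by
    rw [integral_congr_ae eX, integral_sub (by fun_prop) (by fun_prop), integral_const_mul]; simp
  have y1 : ∫ ω, Y ω ∂μ = 2 * ∫ ω, Q ω ∂μ - 1 := by
    rw [integral_congr_ae eY, integral_sub (by fun_prop) (by fun_prop), integral_const_mul]; simp
  have xz : ∫ ω, X ω * Z ω ∂μ = 2 * ∫ ω, P ω * Z ω ∂μ - ∫ ω, Z ω ∂μ := by
    rw [← integral_const_mul, ← integral_sub (iPZ.const_mul 2) iZ]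
    refine integral_congr_ae ?_
    filter_upwards [eX] with ω h
    rw [h]; ring
  have yz : ∫ ω, Z ω * Y ω ∂μ = 2 * ∫ ω, Q ω * Z ω ∂μ - ∫ ω, Z ω ∂μ := by
    rw [← integral_const_mul, ← integral_sub (iQZ.const_mul 2) iZ]
    refine integral_congr_ae ?_
    filter_upwards [eY] with ω h
    rw [h]; ring
  have xy : ∫ ω, X ω * Y ω ∂μ = 4 * ∫ ω, R ω ∂μ - 2 * ∫ ω, P ω ∂μ - 2 * ∫ ω, Q ω ∂μ + 1 := by
    have : ∫ ω, X ω * Y ω ∂μ = ∫ ω, (4 * R ω - 2 * P ω - 2 * Q ω + 1) ∂μ := by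
      refine integral_congr_ae ?_
      filter_upwards [eX, eY] with ω h h'
      rw [h, h', ← eR]; ring
    rw [this, integral_add (by fun_prop) (by fun_prop), integral_sub (by fun_prop) (by fun_prop),
      integral_sub (by fun_prop) (by fun_prop)]
    simp only [integral_const_mul]
    simp
  have zz : ∫ ω, Z ω * Z ω ∂μ = 1 := by
    have : ∫ ω, Z ω * Z ω ∂μ = ∫ ω, (1:ℝ) ∂μ := by
      refine integral_congr_ae ?_
      filter_upwards [hZpm] with ω hω
      rcases hω with hω | hω <;> simp [hω]
    simp [this]
  simp only [var, cov]
  rw [xy, xz, yz, zz, x1, y1, r, k2, l2, k3, l3]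
  ring

lemma cov_noise {Ω : Type*} [MeasurableSpace Ω]
    (μ : Measure Ω) (X Y e f : Ω → ℝ)
    (hX : Measurable X) (hY : Measurable Y) (he : Measurable e) (hf : Measurable f)
    (hef : IndepFun e f μ) (h : IndepFun (fun ω => (e ω, f ω)) (fun ω => (X ω, Y ω)) μ) :
    cov μ (fun ω => e ω * X ω) (fun ω => f ω * Y ω)
      = (∫ ω, e ω ∂μ) * (∫ ω, f ω ∂μ) * cov μ X Y := by
  have h1 : IndepFun e X μ := h.comp measurable_fst measurable_fst
  have h2 : IndepFun f Y μ := h.comp measurable_snd measurable_snd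
  have h3 : IndepFun (fun ω => e ω * f ω) (fun ω => X ω * Y ω) μ :=
    h.comp (measurable_fst.mul measurable_snd) (measurable_fst.mul measurable_snd)
  simp only [cov]
  rw [h1.integral_fun_mul_eq_mul_integral he.aestronglyMeasurable hX.aestronglyMeasurable,
    h2.integral_fun_mul_eq_mul_integral hf.aestronglyMeasurable hY.aestronglyMeasurable]
  have : ∫ ω, e ω * X ω * (f ω * Y ω) ∂μ = ∫ ω, (e ω * f ω) * (X ω * Y ω) ∂μ := by
    congr 1; ext ω; ring
  rw [this, h3.integral_fun_mul_eq_mul_integral (he.mul hf).aestronglyMeasurable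
    (hX.mul hY).aestronglyMeasurable,
    hef.integral_fun_mul_eq_mul_integral he.aestronglyMeasurable hf.aestronglyMeasurable]
  ring

/-- Chain yields a non-star pairing equality: if ±1-valued `X_1, X_2, X_3, X_4`
with positive variances form a Markov chain in this order, and `X_l^e = ε_l X_l` are noisy
versions with flip probabilities `q_l ∈ [0, 1/2)`, where `ε_1, …, ε_4, (X_1, …, X_4)` are
mutually independent, then the noisy covariances satisfy
`Σ'_{1,3} Σ'_{2,4} = Σ'_{1,4} Σ'_{2,3}`. -/
theorem chain_nonstar_equality {Ω : Type*} [MeasurableSpace Ω] [StandardBorelSpace Ω]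
    (μ : Measure Ω) [IsProbabilityMeasure μ]
    (X1 X2 X3 X4 ε1 ε2 ε3 ε4 : Ω → ℝ) (q1 q2 q3 q4 : ℝ)
    (hX1 : Measurable X1) (hX2 : Measurable X2) (hX3 : Measurable X3) (hX4 : Measurable X4)
    (hε1 : Measurable ε1) (hε2 : Measurable ε2) (hε3 : Measurable ε3) (hε4 : Measurable ε4)
    (hX1pm : ∀ᵐ ω ∂μ, X1 ω = 1 ∨ X1 ω = -1)
    (hX2pm : ∀ᵐ ω ∂μ, X2 ω = 1 ∨ X2 ω = -1)
    (hX3pm : ∀ᵐ ω ∂μ, X3 ω = 1 ∨ X3 ω = -1)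
    (hX4pm : ∀ᵐ ω ∂μ, X4 ω = 1 ∨ X4 ω = -1)
    (hε1pm : ∀ᵐ ω ∂μ, ε1 ω = 1 ∨ ε1 ω = -1)
    (hε2pm : ∀ᵐ ω ∂μ, ε2 ω = 1 ∨ ε2 ω = -1)
    (hε3pm : ∀ᵐ ω ∂μ, ε3 ω = 1 ∨ ε3 ω = -1)
    (hε4pm : ∀ᵐ ω ∂μ, ε4 ω = 1 ∨ ε4 ω = -1)
    (hvar1 : 0 < var μ X1) (hvar2 : 0 < var μ X2)
    (hvar3 : 0 < var μ X3) (hvar4 : 0 < var μ X4)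
    -- Markov chain: `X_i ⊥ X_k | σ(X_j)` for all `1 ≤ i < j < k ≤ 4`:
    (hci123 : CondIndepFun (MeasurableSpace.comap X2 inferInstance) hX2.comap_le X1 X3 μ)
    (hci124 : CondIndepFun (MeasurableSpace.comap X2 inferInstance) hX2.comap_le X1 X4 μ)
    (hci134 : CondIndepFun (MeasurableSpace.comap X3 inferInstance) hX3.comap_le X1 X4 μ)
    (hci234 : CondIndepFun (MeasurableSpace.comap X3 inferInstance) hX3.comap_le X2 X4 μ)
    -- flip probabilities:
    (hq1 : (μ {ω | ε1 ω = -1}).toReal = q1) (hq1' : 0 ≤ q1) (hq1'' : q1 < 1 / 2)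
    (hq2 : (μ {ω | ε2 ω = -1}).toReal = q2) (hq2' : 0 ≤ q2) (hq2'' : q2 < 1 / 2)
    (hq3 : (μ {ω | ε3 ω = -1}).toReal = q3) (hq3' : 0 ≤ q3) (hq3'' : q3 < 1 / 2)
    (hq4 : (μ {ω | ε4 ω = -1}).toReal = q4) (hq4' : 0 ≤ q4) (hq4'' : q4 < 1 / 2)
    -- mutual independence of `ε_1, ε_2, ε_3, ε_4, (X_1, X_2, X_3, X_4)`:
    (hindep1 : IndepFun ε1 ε2 μ)
    (hindep2 : IndepFun (fun ω => (ε1 ω, ε2 ω)) ε3 μ)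
    (hindep3 : IndepFun (fun ω => (ε1 ω, ε2 ω, ε3 ω)) ε4 μ)
    (hindep4 : IndepFun (fun ω => (ε1 ω, ε2 ω, ε3 ω, ε4 ω))
      (fun ω => (X1 ω, X2 ω, X3 ω, X4 ω)) μ) :
    cov μ (fun ω => ε1 ω * X1 ω) (fun ω => ε3 ω * X3 ω)
        * cov μ (fun ω => ε2 ω * X2 ω) (fun ω => ε4 ω * X4 ω)
      = cov μ (fun ω => ε1 ω * X1 ω) (fun ω => ε4 ω * X4 ω)
        * cov μ (fun ω => ε2 ω * X2 ω) (fun ω => ε3 ω * X3 ω) := by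
  have c1 := cov_chain μ X1 X3 X2 hX1 hX3 hX2 hX1pm hX3pm hX2pm hci123
  have c2 := cov_chain μ X1 X4 X2 hX1 hX4 hX2 hX1pm hX4pm hX2pm hci124
  have e13 : IndepFun ε1 ε3 μ := hindep2.comp measurable_fst measurable_id
  have e23 : IndepFun ε2 ε3 μ := hindep2.comp measurable_snd measurable_id
  have e14 : IndepFun ε1 ε4 μ := hindep3.comp measurable_fst measurable_id
  have e24 : IndepFun ε2 ε4 μ :=
    hindep3.comp (measurable_fst.comp measurable_snd) measurable_id
  have p1 : Measurable (fun p : ℝ × ℝ × ℝ × ℝ => p.1) := by fun_prop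
  have p2 : Measurable (fun p : ℝ × ℝ × ℝ × ℝ => p.2.1) := by fun_prop
  have p3 : Measurable (fun p : ℝ × ℝ × ℝ × ℝ => p.2.2.1) := by fun_prop
  have p4 : Measurable (fun p : ℝ × ℝ × ℝ × ℝ => p.2.2.2) := by fun_prop
  rw [cov_noise μ X1 X3 ε1 ε3 hX1 hX3 hε1 hε3 e13
      (hindep4.comp (p1.prodMk p3) (p1.prodMk p3)),
    cov_noise μ X2 X4 ε2 ε4 hX2 hX4 hε2 hε4 e24
      (hindep4.comp (p2.prodMk p4) (p2.prodMk p4)),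
    cov_noise μ X1 X4 ε1 ε4 hX1 hX4 hε1 hε4 e14
      (hindep4.comp (p1.prodMk p4) (p1.prodMk p4)),
    cov_noise μ X2 X3 ε2 ε3 hX2 hX3 hε2 hε3 e23
      (hindep4.comp (p2.prodMk p3) (p2.prodMk p3))]
  have key : cov μ X1 X3 * cov μ X2 X4 = cov μ X1 X4 * cov μ X2 X3 := by
    apply mul_right_cancel₀ hvar2.ne'
    linear_combination cov μ X2 X4 * c1 - cov μ X2 X3 * c2
  linear_combination (∫ ω, ε1 ω ∂μ) * (∫ ω, ε2 ω ∂μ) * (∫ ω, ε3 ω ∂μ) * (∫ ω, ε4 ω ∂μ) * key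
end

section
/- (Star with an internal node among the four) Let X_1, X_2, X_3, X_4 be ±1-valued random variables on a standard Borel probability space with Var(X_l) > 0 for all l, such that for all distinct j, k ∈ {2, 3, 4}, X_j and X_k are conditionally independent given the σ-algebra generated by X_1. Let X_l^e = ε_l X_l be noisy versions, where ε_1, …, ε_4 are ±1-valued with P(ε_l = −1) = q_l ∈ [0, 1/2) and ε_1, …, ε_4, (X_1, …, X_4) are mutually independent, and write Σ'_{i,j} = Cov(X_i^e, X_j^e). Then Σ'_{1,3}·Σ'_{2,4} = Σ'_{1,4}·Σ'_{2,3} = Σ'_{1,2}·Σ'_{3,4}. -/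
open MeasureTheory ProbabilityTheory

lemma star_integrable_pm {Ω : Type*} [MeasurableSpace Ω] (μ : Measure Ω) [IsProbabilityMeasure μ]
    (X : Ω → ℝ) (hX : Measurable X) (h : ∀ᵐ ω ∂μ, X ω = 1 ∨ X ω = -1) : Integrable X μ := by
  refine Integrable.of_bound hX.aestronglyMeasurable 1 ?_
  filter_upwards [h] with ω h
  rcases h with h | h <;> simp [h]

lemma star_lin {Ω : Type*} [MeasurableSpace Ω]
    (μ : Measure Ω) [IsProbabilityMeasure μ] (X U : Ω → ℝ) (hX : Measurable X)
    (hXpm : ∀ᵐ ω ∂μ, X ω = 1 ∨ X ω = -1) (hU : Integrable U μ) :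
    ∃ a b : ℝ, (μ[U | MeasurableSpace.comap X inferInstance] =ᵐ[μ] fun ω => a + b * X ω) ∧
      ∫ ω, U ω ∂μ = a + b * ∫ ω, X ω ∂μ ∧
      ∫ ω, X ω * U ω ∂μ = a * (∫ ω, X ω ∂μ) + b := by
  have hXi := star_integrable_pm μ X hX hXpm
  obtain ⟨g, -, hg⟩ := (stronglyMeasurable_condExp (μ := μ) (f := U)
    (m := MeasurableSpace.comap X inferInstance)).exists_eq_measurable_comp
  have e : μ[U | MeasurableSpace.comap X inferInstance] =ᵐ[μ]
      fun ω => (g 1 + g (-1)) / 2 + (g 1 - g (-1)) / 2 * X ω := by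
    filter_upwards [hXpm] with ω h
    rw [hg]
    rcases h with h | h <;> simp only [Function.comp, h] <;> ring
  refine ⟨_, _, e, ?_, ?_⟩
  · rw [← integral_condExp hX.comap_le, integral_congr_ae e,
      integral_add (integrable_const _) (hXi.const_mul _), integral_const_mul]
    simp
  · have hXU : Integrable (X * U) μ := by
      refine hU.bdd_mul (c := 1) hX.aestronglyMeasurable ?_
      filter_upwards [hXpm] with ω h
      rcases h with h | h <;> simp [h]
    have p := condExp_mul_of_aestronglyMeasurable_left
      (m := MeasurableSpace.comap X inferInstance) (μ := μ) (f := X) (g := U)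
      (comap_measurable X).aestronglyMeasurable hXU hU
    have e2 : μ[X * U | MeasurableSpace.comap X inferInstance] =ᵐ[μ]
      fun ω => (g 1 + g (-1)) / 2 * X ω + (g 1 - g (-1)) / 2 := by
      filter_upwards [p, e, hXpm] with ω h1 h2 h3
      rw [h1, Pi.mul_apply, h2]
      rcases h3 with h | h <;> rw [h] <;> ring
    have : ∫ ω, X ω * U ω ∂μ = ∫ ω, (X * U) ω ∂μ := rfl
    rw [this, ← integral_condExp hX.comap_le, integral_congr_ae e2,
      integral_add (hXi.const_mul _) (integrable_const _), integral_const_mul]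
    simp

lemma star_key {Ω : Type*} [MeasurableSpace Ω] [StandardBorelSpace Ω]
    (μ : Measure Ω) [IsProbabilityMeasure μ] (X Y Z : Ω → ℝ)
    (hX : Measurable X) (hY : Measurable Y) (hZ : Measurable Z)
    (hXpm : ∀ᵐ ω ∂μ, X ω = 1 ∨ X ω = -1)
    (hYpm : ∀ᵐ ω ∂μ, Y ω = 1 ∨ Y ω = -1)
    (hZpm : ∀ᵐ ω ∂μ, Z ω = 1 ∨ Z ω = -1)
    (hci : CondIndepFun (MeasurableSpace.comap X inferInstance) hX.comap_le Y Z μ) :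
    var μ X * cov μ Y Z = cov μ X Y * cov μ X Z := by
  have hXi := star_integrable_pm μ X hX hXpm
  have hA : MeasurableSet (Y ⁻¹' {1}) := hY (measurableSet_singleton 1)
  have hB : MeasurableSet (Z ⁻¹' {1}) := hZ (measurableSet_singleton 1)
  have hC := (condIndepFun_iff_condExp_inter_preimage_eq_mul hY hZ).1 hci {1} {1}
    (measurableSet_singleton 1) (measurableSet_singleton 1)
  set U : Ω → ℝ := (Y ⁻¹' {1}).indicator (fun _ => (1:ℝ)) with hUd
  set V : Ω → ℝ := (Z ⁻¹' {1}).indicator (fun _ => (1:ℝ)) with hVd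
  set W : Ω → ℝ := (Y ⁻¹' {1} ∩ Z ⁻¹' {1}).indicator (fun _ => (1:ℝ)) with hWd
  have hU : Integrable U μ := (integrable_const (1:ℝ)).indicator hA
  have hV : Integrable V μ := (integrable_const (1:ℝ)).indicator hB
  have hW : Integrable W μ := (integrable_const (1:ℝ)).indicator (hA.inter hB)
  obtain ⟨a, b, e1, i1, j1⟩ := star_lin μ X U hX hXpm hU
  obtain ⟨c, d, e2, i2, j2⟩ := star_lin μ X V hX hXpm hV
  have iW : ∫ ω, W ω ∂μ = (a * c + b * d) + (a * d + b * c) * ∫ ω, X ω ∂μ := by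
    have e : μ[W | MeasurableSpace.comap X inferInstance] =ᵐ[μ]
        fun ω => (a * c + b * d) + (a * d + b * c) * X ω := by
      filter_upwards [hC, e1, e2, hXpm] with ω h1 h2 h3 h4
      rw [h1, h2, h3]
      rcases h4 with h | h <;> rw [h] <;> ring
    rw [← integral_condExp hX.comap_le, integral_congr_ae e,
      integral_add (integrable_const _) (hXi.const_mul _), integral_const_mul]
    simp
  have hYU : Y =ᵐ[μ] fun ω => 2 * U ω - 1 := by
    filter_upwards [hYpm] with ω h
    rcases h with h | h <;> simp [hUd, Set.indicator, h] <;> norm_num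
  have hZV : Z =ᵐ[μ] fun ω => 2 * V ω - 1 := by
    filter_upwards [hZpm] with ω h
    rcases h with h | h <;> simp [hVd, Set.indicator, h] <;> norm_num
  have hXb : ∀ᵐ ω ∂μ, ‖X ω‖ ≤ 1 := by
    filter_upwards [hXpm] with ω h
    rcases h with h | h <;> simp [h]
  have hXU : Integrable (fun ω => X ω * U ω) μ := hU.bdd_mul hX.aestronglyMeasurable hXb
  have hXV : Integrable (fun ω => X ω * V ω) μ := hV.bdd_mul hX.aestronglyMeasurable hXb
  have EY : ∫ ω, Y ω ∂μ = 2 * (∫ ω, U ω ∂μ) - 1 := by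
    rw [integral_congr_ae hYU, integral_sub (hU.const_mul _) (integrable_const _),
      integral_const_mul]
    simp
  have EZ : ∫ ω, Z ω ∂μ = 2 * (∫ ω, V ω ∂μ) - 1 := by
    rw [integral_congr_ae hZV, integral_sub (hV.const_mul _) (integrable_const _),
      integral_const_mul]
    simp
  have EXY : ∫ ω, X ω * Y ω ∂μ = 2 * (∫ ω, X ω * U ω ∂μ) - ∫ ω, X ω ∂μ := by
    rw [← integral_const_mul, ← integral_sub (hXU.const_mul _) hXi]
    refine integral_congr_ae ?_
    filter_upwards [hYU] with ω h
    rw [h]; ring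
  have EXZ : ∫ ω, X ω * Z ω ∂μ = 2 * (∫ ω, X ω * V ω ∂μ) - ∫ ω, X ω ∂μ := by
    rw [← integral_const_mul, ← integral_sub (hXV.const_mul _) hXi]
    refine integral_congr_ae ?_
    filter_upwards [hZV] with ω h
    rw [h]; ring
  have EYZ : ∫ ω, Y ω * Z ω ∂μ
      = 4 * (∫ ω, W ω ∂μ) - 2 * (∫ ω, U ω ∂μ) - 2 * (∫ ω, V ω ∂μ) + 1 := by
    have : ∫ ω, Y ω * Z ω ∂μ = ∫ ω, (4 * W ω - 2 * U ω - 2 * V ω + 1) ∂μ := by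
      refine integral_congr_ae ?_
      filter_upwards [hYpm, hZpm] with ω h h'
      rcases h with h | h <;> rcases h' with h' | h' <;>
        simp [hUd, hVd, hWd, Set.indicator, h, h'] <;> norm_num
    have w1 : Integrable (fun ω => 4 * W ω) μ := hW.const_mul _
    have u1 : Integrable (fun ω => 2 * U ω) μ := hU.const_mul _
    have v1 : Integrable (fun ω => 2 * V ω) μ := hV.const_mul _
    have wu : Integrable (fun ω => 4 * W ω - 2 * U ω) μ := w1.sub u1
    have wuv : Integrable (fun ω => 4 * W ω - 2 * U ω - 2 * V ω) μ := wu.sub v1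
    rw [this, integral_add wuv (integrable_const _), integral_sub wu v1,
      integral_sub w1 u1, integral_const_mul, integral_const_mul, integral_const_mul]
    simp
  have EXX : ∫ ω, X ω * X ω ∂μ = 1 := by
    have : ∫ ω, X ω * X ω ∂μ = ∫ ω, (1:ℝ) ∂μ := by
      refine integral_congr_ae ?_
      filter_upwards [hXpm] with ω h
      rcases h with h | h <;> simp [h]
    rw [this]; simp
  simp only [var, cov]
  rw [EXX, EYZ, EXY, EXZ, EY, EZ, iW, i1, i2, j1, j2]
  ring

lemma star_noise {Ω : Type*} [MeasurableSpace Ω] (μ : Measure Ω) [IsProbabilityMeasure μ]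
    (X Y e f : Ω → ℝ) (hX : Measurable X) (hY : Measurable Y) (he : Measurable e)
    (hf : Measurable f) (hef : IndepFun e f μ)
    (h : IndepFun (fun ω => (e ω, f ω)) (fun ω => (X ω, Y ω)) μ) :
    cov μ (fun ω => e ω * X ω) (fun ω => f ω * Y ω)
      = (∫ ω, e ω ∂μ) * (∫ ω, f ω ∂μ) * cov μ X Y := by
  have h1 : IndepFun e X μ := h.comp measurable_fst measurable_fst
  have h2 : IndepFun f Y μ := h.comp measurable_snd measurable_snd
  have h3 : IndepFun (e * f) (X * Y) μ :=
    h.comp (measurable_fst.mul measurable_snd) (measurable_fst.mul measurable_snd)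
  have a1 := h1.integral_mul_eq_mul_integral he.aestronglyMeasurable hX.aestronglyMeasurable
  have a2 := h2.integral_mul_eq_mul_integral hf.aestronglyMeasurable hY.aestronglyMeasurable
  have a3 := h3.integral_mul_eq_mul_integral (he.mul hf).aestronglyMeasurable
    (hX.mul hY).aestronglyMeasurable
  have a4 := hef.integral_mul_eq_mul_integral he.aestronglyMeasurable hf.aestronglyMeasurable
  simp only [Pi.mul_apply] at a1 a2 a3 a4
  have a5 : ∫ ω, e ω * X ω * (f ω * Y ω) ∂μ = ∫ ω, e ω * f ω * (X ω * Y ω) ∂μ := by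
    congr 1; ext ω; ring
  simp only [cov]
  rw [a5, a3, a4, a1, a2]
  ring

/-- Star with an internal node among the four: if ±1-valued `X_1, X_2, X_3, X_4`
with positive variances are such that `X_j ⊥ X_k | σ(X_1)` for all distinct `j, k ∈ {2,3,4}`,
and `X_l^e = ε_l X_l` are noisy versions with flip probabilities `q_l ∈ [0, 1/2)`, where
`ε_1, …, ε_4, (X_1, …, X_4)` are mutually independent, then the noisy covariances satisfy
`Σ'_{1,3} Σ'_{2,4} = Σ'_{1,4} Σ'_{2,3} = Σ'_{1,2} Σ'_{3,4}`. -/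
theorem star_internal_equality {Ω : Type*} [MeasurableSpace Ω] [StandardBorelSpace Ω]
    (μ : Measure Ω) [IsProbabilityMeasure μ]
    (X1 X2 X3 X4 ε1 ε2 ε3 ε4 : Ω → ℝ) (q1 q2 q3 q4 : ℝ)
    (hX1 : Measurable X1) (hX2 : Measurable X2) (hX3 : Measurable X3) (hX4 : Measurable X4)
    (hε1 : Measurable ε1) (hε2 : Measurable ε2) (hε3 : Measurable ε3) (hε4 : Measurable ε4)
    (hX1pm : ∀ᵐ ω ∂μ, X1 ω = 1 ∨ X1 ω = -1)
    (hX2pm : ∀ᵐ ω ∂μ, X2 ω = 1 ∨ X2 ω = -1)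
    (hX3pm : ∀ᵐ ω ∂μ, X3 ω = 1 ∨ X3 ω = -1)
    (hX4pm : ∀ᵐ ω ∂μ, X4 ω = 1 ∨ X4 ω = -1)
    (hε1pm : ∀ᵐ ω ∂μ, ε1 ω = 1 ∨ ε1 ω = -1)
    (hε2pm : ∀ᵐ ω ∂μ, ε2 ω = 1 ∨ ε2 ω = -1)
    (hε3pm : ∀ᵐ ω ∂μ, ε3 ω = 1 ∨ ε3 ω = -1)
    (hε4pm : ∀ᵐ ω ∂μ, ε4 ω = 1 ∨ ε4 ω = -1)
    (hvar1 : 0 < var μ X1) (hvar2 : 0 < var μ X2)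
    (hvar3 : 0 < var μ X3) (hvar4 : 0 < var μ X4)
    -- star: `X_j ⊥ X_k | σ(X_1)` for all distinct `j, k ∈ {2, 3, 4}`:
    (hci23 : CondIndepFun (MeasurableSpace.comap X1 inferInstance) hX1.comap_le X2 X3 μ)
    (hci24 : CondIndepFun (MeasurableSpace.comap X1 inferInstance) hX1.comap_le X2 X4 μ)
    (hci34 : CondIndepFun (MeasurableSpace.comap X1 inferInstance) hX1.comap_le X3 X4 μ)
    (hci32 : CondIndepFun (MeasurableSpace.comap X1 inferInstance) hX1.comap_le X3 X2 μ)
    (hci42 : CondIndepFun (MeasurableSpace.comap X1 inferInstance) hX1.comap_le X4 X2 μ)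
    (hci43 : CondIndepFun (MeasurableSpace.comap X1 inferInstance) hX1.comap_le X4 X3 μ)
    -- flip probabilities:
    (hq1 : (μ {ω | ε1 ω = -1}).toReal = q1) (hq1' : 0 ≤ q1) (hq1'' : q1 < 1 / 2)
    (hq2 : (μ {ω | ε2 ω = -1}).toReal = q2) (hq2' : 0 ≤ q2) (hq2'' : q2 < 1 / 2)
    (hq3 : (μ {ω | ε3 ω = -1}).toReal = q3) (hq3' : 0 ≤ q3) (hq3'' : q3 < 1 / 2)
    (hq4 : (μ {ω | ε4 ω = -1}).toReal = q4) (hq4' : 0 ≤ q4) (hq4'' : q4 < 1 / 2)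
    -- mutual independence of `ε_1, ε_2, ε_3, ε_4, (X_1, X_2, X_3, X_4)`:
    (hindep1 : IndepFun ε1 ε2 μ)
    (hindep2 : IndepFun (fun ω => (ε1 ω, ε2 ω)) ε3 μ)
    (hindep3 : IndepFun (fun ω => (ε1 ω, ε2 ω, ε3 ω)) ε4 μ)
    (hindep4 : IndepFun (fun ω => (ε1 ω, ε2 ω, ε3 ω, ε4 ω))
      (fun ω => (X1 ω, X2 ω, X3 ω, X4 ω)) μ) :
    cov μ (fun ω => ε1 ω * X1 ω) (fun ω => ε3 ω * X3 ω)
        * cov μ (fun ω => ε2 ω * X2 ω) (fun ω => ε4 ω * X4 ω)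
      = cov μ (fun ω => ε1 ω * X1 ω) (fun ω => ε4 ω * X4 ω)
        * cov μ (fun ω => ε2 ω * X2 ω) (fun ω => ε3 ω * X3 ω) ∧
    cov μ (fun ω => ε1 ω * X1 ω) (fun ω => ε4 ω * X4 ω)
        * cov μ (fun ω => ε2 ω * X2 ω) (fun ω => ε3 ω * X3 ω)
      = cov μ (fun ω => ε1 ω * X1 ω) (fun ω => ε2 ω * X2 ω)
        * cov μ (fun ω => ε3 ω * X3 ω) (fun ω => ε4 ω * X4 ω) := by
  have n12 := star_noise μ X1 X2 ε1 ε2 hX1 hX2 hε1 hε2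
    hindep1
    (hindep4.comp (φ := fun p : ℝ × ℝ × ℝ × ℝ => (p.1, p.2.1)) (ψ := fun p : ℝ × ℝ × ℝ × ℝ => (p.1, p.2.1))
      (by fun_prop) (by fun_prop))
  have n13 := star_noise μ X1 X3 ε1 ε3 hX1 hX3 hε1 hε3
    (hindep2.comp measurable_fst measurable_id)
    (hindep4.comp (φ := fun p : ℝ × ℝ × ℝ × ℝ => (p.1, p.2.2.1)) (ψ := fun p : ℝ × ℝ × ℝ × ℝ => (p.1, p.2.2.1))
      (by fun_prop) (by fun_prop))
  have n14 := star_noise μ X1 X4 ε1 ε4 hX1 hX4 hε1 hε4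
    (hindep3.comp measurable_fst measurable_id)
    (hindep4.comp (φ := fun p : ℝ × ℝ × ℝ × ℝ => (p.1, p.2.2.2)) (ψ := fun p : ℝ × ℝ × ℝ × ℝ => (p.1, p.2.2.2))
      (by fun_prop) (by fun_prop))
  have n23 := star_noise μ X2 X3 ε2 ε3 hX2 hX3 hε2 hε3
    (hindep2.comp measurable_snd measurable_id)
    (hindep4.comp (φ := fun p : ℝ × ℝ × ℝ × ℝ => (p.2.1, p.2.2.1)) (ψ := fun p : ℝ × ℝ × ℝ × ℝ => (p.2.1, p.2.2.1))
      (by fun_prop) (by fun_prop))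
  have n24 := star_noise μ X2 X4 ε2 ε4 hX2 hX4 hε2 hε4
    (hindep3.comp (measurable_fst.comp measurable_snd) measurable_id)
    (hindep4.comp (φ := fun p : ℝ × ℝ × ℝ × ℝ => (p.2.1, p.2.2.2)) (ψ := fun p : ℝ × ℝ × ℝ × ℝ => (p.2.1, p.2.2.2))
      (by fun_prop) (by fun_prop))
  have n34 := star_noise μ X3 X4 ε3 ε4 hX3 hX4 hε3 hε4
    (hindep3.comp (measurable_snd.comp measurable_snd) measurable_id)
    (hindep4.comp (φ := fun p : ℝ × ℝ × ℝ × ℝ => (p.2.2.1, p.2.2.2)) (ψ := fun p : ℝ × ℝ × ℝ × ℝ => (p.2.2.1, p.2.2.2))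
      (by fun_prop) (by fun_prop))
  have k23 := star_key μ X1 X2 X3 hX1 hX2 hX3 hX1pm hX2pm hX3pm hci23
  have k24 := star_key μ X1 X2 X4 hX1 hX2 hX4 hX1pm hX2pm hX4pm hci24
  have k34 := star_key μ X1 X3 X4 hX1 hX3 hX4 hX1pm hX3pm hX4pm hci34
  rw [n12, n13, n14, n23, n24, n34]
  generalize (∫ ω, ε1 ω ∂μ) = e1
  generalize (∫ ω, ε2 ω ∂μ) = e2
  generalize (∫ ω, ε3 ω ∂μ) = e3
  generalize (∫ ω, ε4 ω ∂μ) = e4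
  constructor
  · apply mul_left_cancel₀ hvar1.ne'
    linear_combination e1 * e2 * e3 * e4 * (cov μ X1 X3 * k24 - cov μ X1 X4 * k23)
  · apply mul_left_cancel₀ hvar1.ne'
    linear_combination e1 * e2 * e3 * e4 * (cov μ X1 X4 * k23 - cov μ X1 X2 * k34)
end

section
/- Let a, b, c, d and ã, b̃, c̃, d̃ be real numbers, and let δ ≥ 0 and s > 0 be such that |a − ã| ≤ δ, |b − b̃| ≤ δ, |c − c̃| ≤ δ, |d − d̃| ≤ δ, that |ã| ≥ s, |b̃| ≥ s, |c̃| ≥ s, |d̃| ≥ s, that |ã| ≤ 1 and |b̃| ≤ 1, and that δ/s ≤ 0.4. Then |ab/(cd) − ãb̃/(c̃d̃)| ≤ 16δ/s³. -/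
theorem rel_aux (a t δ s : ℝ) (hs : 0 < s) (h : |a - t| ≤ δ) (ht : s ≤ |t|) :
    ∃ x, a = t * (1 + x) ∧ -(δ / s) ≤ x ∧ x ≤ δ / s := by
  have h0 : 0 < |t| := by linarith
  have ht0 : t ≠ 0 := abs_pos.mp h0
  refine ⟨(a - t) / t, by field_simp; ring, abs_le.mp ?_⟩
  rw [abs_div]
  have := abs_nonneg (a - t)
  gcongr
  linarith

theorem prod_aux (r x y : ℝ) (hr1 : r ≤ 0.4) (h1 : -r ≤ x) (h2 : x ≤ r)
    (h3 : -r ≤ y) (h4 : y ≤ r) :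
    (1 - r) ^ 2 ≤ (1 + x) * (1 + y) ∧ (1 + x) * (1 + y) ≤ (1 + r) ^ 2 := by
  norm_num at hr1
  constructor
  · have : (1 - r) * (1 - r) ≤ (1 + x) * (1 + y) := by
      apply mul_le_mul <;> linarith
    linarith
  · have : (1 + x) * (1 + y) ≤ (1 + r) * (1 + r) := by
      apply mul_le_mul <;> linarith
    linarith

/-- Perturbation bound for covariance ratios: if `a, b, c, d` are within `δ` of
`ã, b̃, c̃, d̃`, the latter are at least `s > 0` in absolute value, `|ã| ≤ 1`, `|b̃| ≤ 1`, and
`δ/s ≤ 0.4`, then `|ab/(cd) - ãb̃/(c̃d̃)| ≤ 16δ/s³`. -/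
theorem ratio_perturbation_bound (a b c d ta tb tc td δ s : ℝ)
    (hδ : 0 ≤ δ) (hs : 0 < s)
    (ha : |a - ta| ≤ δ) (hb : |b - tb| ≤ δ) (hc : |c - tc| ≤ δ) (hd : |d - td| ≤ δ)
    (hta : s ≤ |ta|) (htb : s ≤ |tb|) (htc : s ≤ |tc|) (htd : s ≤ |td|)
    (hta1 : |ta| ≤ 1) (htb1 : |tb| ≤ 1)
    (hratio : δ / s ≤ 0.4) :
    |a * b / (c * d) - ta * tb / (tc * td)| ≤ 16 * δ / s ^ 3 := by
  obtain ⟨x, rfl, hx1, hx2⟩ := rel_aux a ta δ s hs ha hta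
  obtain ⟨y, rfl, hy1, hy2⟩ := rel_aux b tb δ s hs hb htb
  obtain ⟨z, rfl, hz1, hz2⟩ := rel_aux c tc δ s hs hc htc
  obtain ⟨w, rfl, hw1, hw2⟩ := rel_aux d td δ s hs hd htd
  have hr0 : 0 ≤ δ / s := by positivity
  have hR : 16 * δ / s ^ 3 = 1 / s ^ 2 * (16 * (δ / s)) := by field_simp
  rw [hR]
  clear hR ha hb hc hd
  generalize δ / s = r at *
  obtain ⟨p1, p2⟩ := prod_aux r x y hratio hx1 hx2 hy1 hy2
  obtain ⟨q1, q2⟩ := prod_aux r z w hratio hz1 hz2 hw1 hw2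
  norm_num at hratio
  have htc0 : tc ≠ 0 := abs_pos.mp (by linarith)
  have htd0 : td ≠ 0 := abs_pos.mp (by linarith)
  have hz : 0 < 1 + z := by linarith
  have hw : 0 < 1 + w := by linarith
  have e : ta * (1 + x) * (tb * (1 + y)) / (tc * (1 + z) * (td * (1 + w)))
      - ta * tb / (tc * td) = ta * tb / (tc * td) *
        (((1 + x) * (1 + y) - (1 + z) * (1 + w)) / ((1 + z) * (1 + w))) := by
    field_simp
  rw [e, abs_mul]
  have hq : (0.36 : ℝ) ≤ (1 + z) * (1 + w) := by norm_num; nlinarith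
  apply mul_le_mul _ _ (abs_nonneg _) (by positivity)
  · rw [abs_div, abs_mul, abs_mul]
    apply div_le_div₀ zero_le_one _ (by positivity) _
    · exact mul_le_one₀ hta1 (abs_nonneg _) htb1
    · rw [sq]; exact mul_le_mul htc htd hs.le (abs_nonneg _)
  · have hqp : 0 < (1 + z) * (1 + w) := by positivity
    rw [abs_div, abs_of_pos hqp, div_le_iff₀ hqp]
    have h1 : |(1 + x) * (1 + y) - (1 + z) * (1 + w)| ≤ 4 * r := by
      rw [abs_le]; constructor <;> nlinarith
    norm_num at hq
    nlinarith
end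

section
/- (Core identity of the unidentifiability construction: leaf–neighbor swap) Let q_1, q_2, q_k ∈ [0, 1/2) and let Σ_{1,1}, Σ_{2,2}, Σ_{1,2}, Σ_{1,k}, Σ_{2,k} be real numbers with Σ_{2,2} > 0 and D := Σ_{1,2}²/Σ_{2,2} − Σ_{1,1} + 1 ∈ (0, 1], satisfying the correlation-decay relation Σ_{1,k}·Σ_{2,2} = Σ_{1,2}·Σ_{2,k}. Define the noisy quantities Σ'_{1,2} = (1−2q_1)(1−2q_2)Σ_{1,2}, Σ'_{1,k} = (1−2q_1)(1−2q_k)Σ_{1,k}, Σ'_{2,k} = (1−2q_2)(1−2q_k)Σ_{2,k}, and Σ'_{1,1} = 1 − (1−2q_1)²(1 − Σ_{1,1}). Define q̂_1 = (1/2)(1 − (1−2q_1)√D), q̂_2 = 0, q̂_k = q_k, and the re-estimated quantities Σ̂_{1,2} = Σ'_{1,2}/((1−2q̂_1)(1−2q̂_2)), Σ̂_{1,k} = Σ'_{1,k}/((1−2q̂_1)(1−2q̂_k)), Σ̂_{2,k} = Σ'_{2,k}/((1−2q̂_2)(1−2q̂_k)), and Σ̂_{1,1} = 1 − (1 − Σ'_{1,1})/(1−2q̂_1)².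 Then Σ̂_{2,k}·Σ̂_{1,1} = Σ̂_{1,k}·Σ̂_{1,2}. -/
/-- Core identity of the unidentifiability construction: leaf–neighbor swap.
Here `S__` denote non-noisy covariances, `N__` the noisy covariances, `qh_` the alternative
error probabilities, and `E__` the re-estimated covariances; the hypothesis
`S1k ⬝ S22 = S12 ⬝ S2k` encodes `X_1 ⊥ X_k | X_2` and the conclusion
`E2k ⬝ E11 = E1k ⬝ E12` encodes `X_2 ⊥ X_k | X_1`. -/
theorem leaf_neighbor_swap
    (q1 q2 qk : ℝ)
    (hq1 : 0 ≤ q1) (hq1' : q1 < 1 / 2)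
    (hq2 : 0 ≤ q2) (hq2' : q2 < 1 / 2)
    (hqk : 0 ≤ qk) (hqk' : qk < 1 / 2)
    (S11 S22 S12 S1k S2k : ℝ) (hS22 : 0 < S22)
    (D : ℝ) (hD : D = S12 ^ 2 / S22 - S11 + 1) (hD0 : 0 < D) (hD1 : D ≤ 1)
    -- correlation-decay relation encoding `X_1 ⊥ X_k | X_2`:
    (hdecay : S1k * S22 = S12 * S2k)
    -- noisy quantities:
    (N12 N1k N2k N11 : ℝ)
    (hN12 : N12 = (1 - 2 * q1) * (1 - 2 * q2) * S12)
    (hN1k : N1k = (1 - 2 * q1) * (1 - 2 * qk) * S1k)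
    (hN2k : N2k = (1 - 2 * q2) * (1 - 2 * qk) * S2k)
    (hN11 : N11 = 1 - (1 - 2 * q1) ^ 2 * (1 - S11))
    -- alternative error probabilities:
    (qh1 qh2 qhk : ℝ)
    (hqh1 : qh1 = (1 / 2) * (1 - (1 - 2 * q1) * Real.sqrt D))
    (hqh2 : qh2 = 0) (hqhk : qhk = qk)
    -- re-estimated quantities:
    (E12 E1k E2k E11 : ℝ)
    (hE12 : E12 = N12 / ((1 - 2 * qh1) * (1 - 2 * qh2)))
    (hE1k : E1k = N1k / ((1 - 2 * qh1) * (1 - 2 * qhk)))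
    (hE2k : E2k = N2k / ((1 - 2 * qh2) * (1 - 2 * qhk)))
    (hE11 : E11 = 1 - (1 - N11) / (1 - 2 * qh1) ^ 2) :
    E2k * E11 = E1k * E12 := by
  have hs : 0 < Real.sqrt D := Real.sqrt_pos.mpr hD0
  have hs2 : Real.sqrt D ^ 2 = D := Real.sq_sqrt hD0.le
  have ha : 1 - 2 * q1 ≠ 0 := by linarith
  have hk : 1 - 2 * qk ≠ 0 := by linarith
  have h1 : 1 - 2 * qh1 = (1 - 2 * q1) * Real.sqrt D := by rw [hqh1]; ring
  generalize Real.sqrt D = s at *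
  have hs0 : s ≠ 0 := hs.ne'
  have hS0 : S22 ≠ 0 := hS22.ne'
  have e11 : E11 = (s ^ 2 - 1 + S11) / s ^ 2 := by
    rw [hE11, h1, hN11]
    field_simp
    ring
  have e12 : E12 = (1 - 2 * q2) * S12 / s := by
    rw [hE12, h1, hN12, hqh2]
    field_simp
    ring
  have e1k : E1k = S1k / s := by
    rw [hE1k, h1, hN1k, hqhk]
    field_simp
  have e2k : E2k = (1 - 2 * q2) * S2k := by
    rw [hE2k, hN2k, hqh2, hqhk]
    field_simp
    ring
  have hS1k : S1k = S12 * S2k / S22 := by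
    rw [eq_div_iff hS0, hdecay]
  have hx : s ^ 2 - 1 + S11 = S12 ^ 2 / S22 := by rw [hs2, hD]; ring
  rw [e11, e12, e1k, e2k, hx, hS1k]
  field_simp
end

section
/- (Second core identity of the unidentifiability construction) Let q_1, q_2, q_{k_1}, q_{k_2} ∈ [0, 1/2) and let Σ_{1,1}, Σ_{2,2}, Σ_{1,2}, Σ_{1,k_1}, Σ_{1,k_2}, Σ_{2,k_1}, Σ_{2,k_2}, Σ_{k_1,k_2} be real numbers with Σ_{2,2} > 0 and D := Σ_{1,2}²/Σ_{2,2} − Σ_{1,1} + 1 ∈ (0, 1], satisfying the correlation-decay relations Σ_{1,k_i}·Σ_{2,2} = Σ_{1,2}·Σ_{2,k_i} for i = 1, 2 and Σ_{k_1,k_2}·Σ_{2,2} = Σ_{2,k_1}·Σ_{2,k_2}. Define noisy quantities Σ'_{i,j} = (1−2q_i)(1−2q_j)Σ_{i,j} for all pairs and Σ'_{1,1} = 1 − (1−2q_1)²(1 − Σ_{1,1}); define q̂_1 = (1/2)(1 − (1−2q_1)√D), q̂_2 = 0, q̂_{k_1} = q_{k_1}, q̂_{k_2} = q_{k_2}; and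 define Σ̂_{i,j} = Σ'_{i,j}/((1−2q̂_i)(1−2q̂_j)) and Σ̂_{1,1} = 1 − (1 − Σ'_{1,1})/(1−2q̂_1)². Then Σ̂_{k_1,k_2}·Σ̂_{1,1} = Σ̂_{1,k_1}·Σ̂_{1,k_2}. -/
/-- Second core identity of the unidentifiability construction.
Here `S__` denote non-noisy covariances, `N__` the noisy covariances, `qh_` the alternative
error probabilities, and `E__` the re-estimated covariances; the hypotheses encode
`X_1 ⊥ X_{k_i} | X_2` and `X_{k_1} ⊥ X_{k_2} | X_2`, and the conclusion
`Ek1k2 ⬝ E11 = E1k1 ⬝ E1k2` encodes `X_{k_1} ⊥ X_{k_2} | X_1`. -/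
theorem leaf_neighbor_swap_pair
    (q1 q2 qk1 qk2 : ℝ)
    (hq1 : 0 ≤ q1) (hq1' : q1 < 1 / 2)
    (hq2 : 0 ≤ q2) (hq2' : q2 < 1 / 2)
    (hqk1 : 0 ≤ qk1) (hqk1' : qk1 < 1 / 2)
    (hqk2 : 0 ≤ qk2) (hqk2' : qk2 < 1 / 2)
    (S11 S22 S12 S1k1 S1k2 S2k1 S2k2 Sk1k2 : ℝ) (hS22 : 0 < S22)
    (D : ℝ) (hD : D = S12 ^ 2 / S22 - S11 + 1) (hD0 : 0 < D) (hD1 : D ≤ 1)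
    -- correlation-decay relations:
    (hdecay1 : S1k1 * S22 = S12 * S2k1)
    (hdecay2 : S1k2 * S22 = S12 * S2k2)
    (hdecay3 : Sk1k2 * S22 = S2k1 * S2k2)
    -- noisy quantities:
    (N12 N1k1 N1k2 N2k1 N2k2 Nk1k2 N11 : ℝ)
    (hN12 : N12 = (1 - 2 * q1) * (1 - 2 * q2) * S12)
    (hN1k1 : N1k1 = (1 - 2 * q1) * (1 - 2 * qk1) * S1k1)
    (hN1k2 : N1k2 = (1 - 2 * q1) * (1 - 2 * qk2) * S1k2)
    (hN2k1 : N2k1 = (1 - 2 * q2) * (1 - 2 * qk1) * S2k1)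
    (hN2k2 : N2k2 = (1 - 2 * q2) * (1 - 2 * qk2) * S2k2)
    (hNk1k2 : Nk1k2 = (1 - 2 * qk1) * (1 - 2 * qk2) * Sk1k2)
    (hN11 : N11 = 1 - (1 - 2 * q1) ^ 2 * (1 - S11))
    -- alternative error probabilities:
    (qh1 qh2 qhk1 qhk2 : ℝ)
    (hqh1 : qh1 = (1 / 2) * (1 - (1 - 2 * q1) * Real.sqrt D))
    (hqh2 : qh2 = 0) (hqhk1 : qhk1 = qk1) (hqhk2 : qhk2 = qk2)
    -- re-estimated quantities:
    (E1k1 E1k2 Ek1k2 E11 : ℝ)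
    (hE1k1 : E1k1 = N1k1 / ((1 - 2 * qh1) * (1 - 2 * qhk1)))
    (hE1k2 : E1k2 = N1k2 / ((1 - 2 * qh1) * (1 - 2 * qhk2)))
    (hEk1k2 : Ek1k2 = Nk1k2 / ((1 - 2 * qhk1) * (1 - 2 * qhk2)))
    (hE11 : E11 = 1 - (1 - N11) / (1 - 2 * qh1) ^ 2) :
    Ek1k2 * E11 = E1k1 * E1k2 := by
  have ha : (1 - 2 * q1) ≠ 0 := by linarith
  have hb : (1 - 2 * qk1) ≠ 0 := by linarith
  have hc : (1 - 2 * qk2) ≠ 0 := by linarith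
  have hs : Real.sqrt D ≠ 0 := (Real.sqrt_pos.mpr hD0).ne'
  have hss : Real.sqrt D ^ 2 = D := Real.sq_sqrt hD0.le
  have hq : 1 - 2 * qh1 = (1 - 2 * q1) * Real.sqrt D := by rw [hqh1]; ring
  have hS : S22 ≠ 0 := hS22.ne'
  have h1 : E1k1 = S1k1 / Real.sqrt D := by
    rw [hE1k1, hq, hN1k1, hqhk1, div_eq_div_iff (by positivity) hs]; ring
  have h2 : E1k2 = S1k2 / Real.sqrt D := by
    rw [hE1k2, hq, hN1k2, hqhk2, div_eq_div_iff (by positivity) hs]; ring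
  have h3 : Ek1k2 = Sk1k2 := by
    rw [hEk1k2, hNk1k2, hqhk1, hqhk2, div_eq_iff (by positivity)]; ring
  have h4 : E11 = (S12 ^ 2 / S22) / D := by
    have hD' : D ≠ 0 := hD0.ne'
    have e : (1 - N11) / (1 - 2 * qh1) ^ 2 = (1 - S11) / D := by
      rw [hq, hN11, mul_pow, hss, div_eq_div_iff (by positivity) hD']; ring
    rw [hE11, e, eq_div_iff hD', sub_mul, div_mul_cancel₀ _ hD']
    linarith
  have e1 : S1k1 = S12 * S2k1 / S22 := by rw [eq_div_iff hS, hdecay1]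
  have e2 : S1k2 = S12 * S2k2 / S22 := by rw [eq_div_iff hS, hdecay2]
  have e3 : Sk1k2 = S2k1 * S2k2 / S22 := by rw [eq_div_iff hS, hdecay3]
  rw [h1, h2, h3, h4, div_mul_div_comm, ← sq (Real.sqrt D), hss, e1, e2, e3]
  ring
end
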